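/- For 0 < b ≤ a and d ∈ {2,3}, the integral ∫_{p ≥ a, q ≥ b} e^{−(p+q)} (∫_0^{min(p,q)} e^r / (pq − r²)^{d/2} dr) dq dp is finite. In particular, for d = 3, ∫_{q ≥ a} ∫_{a ≤ p < q} e^{−q} (∫_0^p dr/(pq − r²)^{3/2}) dp dq = 2 ∫_a^∞ (e^{−q}/q) · arccos(√(a/q)) dq. -/

import Mathlib

open Set MeasureTheory

lemma aux_rpow {y : ℝ} (hy : 0 < y) : y ^ ((3:ℝ)/2) = y * Real.sqrt y := by
  rw [show (3:ℝ)/2 = 1 + 1/2 by norm_num, Real.rpow_add hy, Real.rpow_one, Real.sqrt_eq_rpow]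

lemma aux_pos {m M r : ℝ} (hm : 0 < m) (hM : m < M) (h0 : 0 ≤ r) (h1 : r ≤ m) :
    0 < m * M - r ^ 2 := by nlinarith

lemma aux_cont {m M : ℝ} (hm : 0 < m) (hM : m < M) (s : ℝ) :
    ContinuousOn (fun r : ℝ => 1 / (m * M - r^2) ^ s) (uIcc 0 m) := by
  rw [uIcc_of_le hm.le]
  apply ContinuousOn.div continuousOn_const
  · apply ContinuousOn.rpow_const (by fun_prop)
    intro r hr
    exact Or.inl (aux_pos hm hM hr.1 hr.2).ne'
  · intro r hr
    exact (Real.rpow_pos_of_pos (aux_pos hm hM hr.1 hr.2) _).ne'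

lemma aux_inner {m M : ℝ} (hm : 0 < m) (hM : m < M) :
    ∫ r in (0:ℝ)..m, 1 / (m * M - r^2) ^ ((3:ℝ)/2) = 1 / (M * Real.sqrt (m * (M - m))) := by
  have hMpos : 0 < M := hm.trans hM
  rw [intervalIntegral.integral_eq_sub_of_hasDerivAt
    (f := fun r => r / (m * M * Real.sqrt (m * M - r^2)))]
  · have : m * M - m ^ 2 = m * (M - m) := by ring
    rw [this]
    have : 0 < Real.sqrt (m * (M - m)) := Real.sqrt_pos.2 (mul_pos hm (by linarith))
    field_simp
    simp
  · intro r hr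
    rw [uIcc_of_le hm.le] at hr
    have hp := aux_pos hm hM hr.1 hr.2
    have hs := Real.sqrt_pos.2 hp
    have h1 : HasDerivAt (fun r : ℝ => m * M - r^2) (-(2 * r)) r := by
      simpa using (hasDerivAt_pow 2 r).const_sub (m * M)
    have h2 := (h1.sqrt hp.ne').const_mul (m * M)
    have h3 := (hasDerivAt_id r).div h2 (by positivity)
    refine h3.congr_deriv ?_
    rw [aux_rpow hp]
    simp only [id]
    have hsq := Real.sq_sqrt hp.le
    set S := Real.sqrt (m * M - r^2)
    rw [← hsq]
    have hr2 : m * M = S^2 + r^2 := by linarith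
    field_simp
    rw [hr2]
    ring
  · exact (aux_cont hm hM _).intervalIntegrable

lemma aux_outer {a q : ℝ} (ha : 0 < a) (hq : a < q) :
    ∫ p in Ico a q, 1 / Real.sqrt (p * (q - p)) = 2 * Real.arccos (Real.sqrt (a / q)) := by
  have hqpos : 0 < q := ha.trans hq
  rw [integral_Ico_eq_integral_Ioo, ← integral_Ioc_eq_integral_Ioo,
    ← intervalIntegral.integral_of_le hq.le]
  have hc : ContinuousOn (fun p => -2 * Real.arccos (Real.sqrt (p / q))) (Icc a q) := by
    apply Continuous.continuousOn
    exact continuous_const.mul (Real.continuous_arccos.comp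
      (Real.continuous_sqrt.comp (continuous_id.div_const q)))
  have hd : ∀ p ∈ Ioo a q, HasDerivAt (fun p => -2 * Real.arccos (Real.sqrt (p / q)))
      (1 / Real.sqrt (p * (q - p))) p := by
    intro p hp
    have hp0 : 0 < p := ha.trans hp.1
    have hqp : 0 < q - p := by linarith [hp.2]
    have hpq : 0 < p / q := by positivity
    have hlt : p / q < 1 := (div_lt_one hqpos).2 hp.2
    have hs1 : Real.sqrt (p / q) < 1 := by
      rw [Real.sqrt_lt' one_pos]; simpa using hlt
    have hs0 := Real.sqrt_pos.2 hpq
    have h1 := ((hasDerivAt_id p).div_const q).sqrt hpq.ne'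
    have h2 := ((Real.hasDerivAt_arccos (by simp only [id]; linarith) (by simpa using hs1.ne)).comp p h1).const_mul (-2)
    refine h2.congr_deriv ?_
    simp only [id]
    rw [Real.sq_sqrt hpq.le, show 1 - p / q = (q - p) / q by field_simp,
      Real.sqrt_div hqp.le, Real.sqrt_div hp0.le, Real.sqrt_mul hp0.le]
    have := Real.sqrt_pos.2 hp0
    have := Real.sqrt_pos.2 hqpos
    have := Real.sqrt_pos.2 hqp
    field_simp
    rw [Real.sq_sqrt hqpos.le]
  rw [intervalIntegral.integral_eq_sub_of_hasDerivAt_of_le hq.le hc hd]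
  · simp [div_self hqpos.ne']
  · rw [intervalIntegrable_iff_integrableOn_Ioc_of_le hq.le]
    exact intervalIntegral.integrableOn_deriv_of_nonneg hc hd (fun p _ => by positivity)

/-- The bound of the inner integral, for `m < M`. -/
lemma aux_bound {b m M : ℝ} (hb : 0 < b) (hm : b ≤ m) (hM : m < M) (d : ℕ) (hd : d = 2 ∨ d = 3) :
    ‖∫ r in (0:ℝ)..m, Real.exp r / (m * M - r^2) ^ ((d:ℝ)/2)‖
      ≤ Real.exp m * ((1 + 1 / b) / Real.sqrt b * (M - m) ^ (-(1/2) : ℝ)) := by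
  have hm0 : 0 < m := hb.trans_le hm
  have hM0 : 0 < M := hm0.trans hM
  have hMm : 0 < M - m := by linarith
  have hpt : ∀ r ∈ Icc 0 m, ‖Real.exp r / (m * M - r^2) ^ ((d:ℝ)/2)‖ ≤
      Real.exp m * (M * (1 + 1 / b)) * (1 / (m * M - r^2) ^ ((3:ℝ)/2)) := by
    intro r hr
    have hp := aux_pos hm0 hM hr.1 hr.2
    have he : Real.exp r ≤ Real.exp m := Real.exp_le_exp.2 hr.2
    have hb1 : 1 ≤ M * (1 / b) := by
      rw [mul_one_div, one_le_div hb]; linarith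
    rw [Real.norm_of_nonneg (by positivity)]
    rcases hd with rfl | rfl
    · have hs := Real.sqrt_pos.2 hp
      have hsM : Real.sqrt (m * M - r^2) ≤ M := by
        rw [Real.sqrt_le_left hM0.le]; nlinarith [sq_nonneg r]
      rw [aux_rpow hp, show (((2:ℕ):ℝ)/2) = 1 by norm_num, Real.rpow_one, mul_one_div,
        div_le_div_iff₀ hp (by positivity)]
      have : Real.exp r * Real.sqrt (m * M - r^2) ≤ Real.exp m * (M * (1 + 1 / b)) := by
        apply mul_le_mul he _ hs.le (Real.exp_pos _).le
        have : 0 < M * (1 / b) := by positivity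
        nlinarith
      nlinarith
    · push_cast
      rw [mul_one_div]
      gcongr
      nlinarith [Real.exp_pos m]
  calc _ ≤ ∫ r in (0:ℝ)..m, Real.exp m * (M * (1 + 1 / b)) * (1 / (m * M - r^2) ^ ((3:ℝ)/2)) := by
        apply intervalIntegral.norm_integral_le_of_norm_le hm0.le
        · exact Filter.Eventually.of_forall fun r hr => hpt r ⟨hr.1.le, hr.2⟩
        · exact ((aux_cont hm0 hM _).intervalIntegrable).const_mul _
    _ = Real.exp m * ((1 + 1 / b) / Real.sqrt m * (M - m) ^ (-(1/2) : ℝ)) := by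
        rw [intervalIntegral.integral_const_mul, aux_inner hm0 hM, Real.rpow_neg hMm.le,
          ← Real.sqrt_eq_rpow, Real.sqrt_mul hm0.le]
        have := Real.sqrt_pos.2 hm0
        have := Real.sqrt_pos.2 hMm
        field_simp
    _ ≤ _ := by
        have := Real.sqrt_pos.2 hb
        have := Real.sqrt_le_sqrt hm
        have := Real.rpow_nonneg hMm.le (-(1/2))
        gcongr

lemma aux_g : Integrable (fun u : ℝ => |u| ^ (-(1/2) : ℝ) * Real.exp (-(1/2) * |u|)) := by
  have hI : IntegrableOn (fun u : ℝ => |u| ^ (-(1/2) : ℝ) * Real.exp (-(1/2) * |u|)) (Ioi 0) := by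
    have h := integrableOn_rpow_mul_exp_neg_mul_rpow (p := 1) (s := -(1/2)) (b := 1/2)
      (by norm_num) (by norm_num) (by norm_num)
    refine h.congr_fun ?_ measurableSet_Ioi
    intro u hu
    have hu' : 0 < u := hu
    simp only [Real.rpow_one, abs_of_pos hu']
  rw [← integrableOn_univ, ← @Iio_union_Ici _ _ (0 : ℝ), integrableOn_union,
    integrableOn_Ici_iff_integrableOn_Ioi]
  refine ⟨?_, hI⟩
  rw [← (Measure.measurePreserving_neg (volume : Measure ℝ)).integrableOn_comp_preimage
      (Homeomorph.neg ℝ).measurableEmbedding]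
  simpa only [Function.comp_def, abs_neg, neg_preimage, neg_Iio, neg_zero] using hI

lemma aux_f : Integrable (indicator (Ioi (0:ℝ)) (fun t : ℝ => Real.exp (-(1/2) * t))) := by
  rw [integrable_indicator_iff measurableSet_Ioi]
  exact exp_neg_integrableOn_Ioi 0 (by norm_num)

lemma aux_maj : Integrable (fun x : ℝ × ℝ =>
    indicator (Ioi (0:ℝ)) (fun t : ℝ => Real.exp (-(1/2) * t)) x.2 *
      (|x.1 - x.2| ^ (-(1/2) : ℝ) * Real.exp (-(1/2) * |x.1 - x.2|))) :=
  Integrable.convolution_integrand (ContinuousLinearMap.mul ℝ ℝ) aux_f aux_g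

lemma aux_ne : ∀ᵐ x : ℝ × ℝ, x.1 ≠ x.2 := by
  have : MeasurableSet {x : ℝ × ℝ | x.1 = x.2} := (isClosed_eq continuous_fst continuous_snd).measurableSet
  have h := (Measure.measure_prod_null (μ := (volume : Measure ℝ)) (ν := (volume : Measure ℝ)) this).2
    (Filter.Eventually.of_forall fun x => by simp [preimage])
  rw [ae_iff]
  simpa [Measure.volume_eq_prod] using h

lemma aux_meas (s : ℝ) : AEStronglyMeasurable (fun x : ℝ × ℝ =>
    ∫ r, indicator (Ioc 0 (min x.1 x.2)) (fun r => Real.exp r / (x.1 * x.2 - r^2) ^ s) r) := by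
  have hm : Measurable (fun y : (ℝ × ℝ) × ℝ => indicator {y : (ℝ × ℝ) × ℝ | 0 < y.2 ∧ y.2 ≤ min y.1.1 y.1.2}
      (fun y => Real.exp y.2 / (y.1.1 * y.1.2 - y.2^2) ^ s) y) := by
    apply Measurable.indicator
    · fun_prop
    · exact (measurableSet_lt measurable_const measurable_snd).inter
        (measurableSet_le measurable_snd (measurable_fst.fst.min measurable_fst.snd))
  have := hm.stronglyMeasurable.integral_prod_right' (ν := (volume : Measure ℝ))
  exact this.aestronglyMeasurable

theorem second_moment_case3 (a b : ℝ) (hb : 0 < b) (hba : b ≤ a) :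
    (∀ d : ℕ, d = 2 ∨ d = 3 →
      IntegrableOn (fun x : ℝ × ℝ =>
          Real.exp (-(x.1 + x.2)) *
            ∫ r in (0:ℝ)..(min x.1 x.2), Real.exp r / (x.1 * x.2 - r^2) ^ ((d:ℝ)/2))
        {x : ℝ × ℝ | a ≤ x.1 ∧ b ≤ x.2}) ∧
    (∫ q in Ioi a, ∫ p in Ico a q,
        Real.exp (-q) * ∫ r in (0:ℝ)..p, 1 / (p * q - r^2) ^ ((3:ℝ)/2))
      = 2 * ∫ q in Ioi a, Real.exp (-q) / q * Real.arccos (Real.sqrt (a/q)) := by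
  have ha : 0 < a := hb.trans_le hba
  have hS : MeasurableSet {x : ℝ × ℝ | a ≤ x.1 ∧ b ≤ x.2} :=
    (measurableSet_le measurable_const measurable_fst).inter
      (measurableSet_le measurable_const measurable_snd)
  constructor
  · intro d hd
    refine Integrable.mono' ((aux_maj.const_mul ((1 + 1 / b) / Real.sqrt b)).integrableOn) ?_ ?_
    · apply AEStronglyMeasurable.mul
      · exact Continuous.aestronglyMeasurable (by fun_prop)
      · refine (aux_meas ((d:ℝ)/2)).restrict.congr ?_
        filter_upwards [ae_restrict_mem hS] with x hx
        have : 0 ≤ min x.1 x.2 := le_min (ha.le.trans hx.1) (hb.le.trans hx.2)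
        rw [intervalIntegral.integral_of_le this, integral_indicator measurableSet_Ioc]
    · filter_upwards [ae_restrict_mem hS, ae_restrict_of_ae aux_ne] with x hx hne
      obtain ⟨p, q⟩ := x
      simp only at hx hne ⊢
      have hq0 : 0 < q := hb.trans_le hx.2
      have hp0 : 0 < p := ha.trans_le hx.1
      rw [indicator_of_mem (by exact hq0), norm_mul, Real.norm_of_nonneg (Real.exp_pos _).le]
      have key : ‖∫ r in (0:ℝ)..(min p q), Real.exp r / (p * q - r^2) ^ ((d:ℝ)/2)‖ ≤
          Real.exp (min p q) * ((1 + 1 / b) / Real.sqrt b * |p - q| ^ (-(1/2) : ℝ)) := by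
        rcases lt_or_gt_of_ne hne with h | h
        · rw [min_eq_left h.le, abs_sub_comm, abs_of_pos (sub_pos.2 h)]
          exact aux_bound hb (hba.trans hx.1) h d hd
        · rw [min_eq_right h.le, abs_of_pos (sub_pos.2 h), mul_comm p q]
          exact aux_bound hb hx.2 h d hd
      have hexp : Real.exp (-(p + q)) * Real.exp (min p q) ≤
          Real.exp (-(1/2) * q) * Real.exp (-(1/2) * |p - q|) := by
        rw [← Real.exp_add, ← Real.exp_add, Real.exp_le_exp]
        rcases le_total p q with h | h
        · rw [min_eq_left h, abs_of_nonpos (by linarith)]; linarith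
        · rw [min_eq_right h, abs_of_nonneg (by linarith)]; linarith
      have hsb := Real.sqrt_pos.2 hb
      have hr := Real.rpow_nonneg (abs_nonneg (p - q)) (-(1/2))
      calc _ ≤ Real.exp (-(p + q)) * (Real.exp (min p q) * ((1 + 1 / b) / Real.sqrt b * |p - q| ^ (-(1/2) : ℝ))) := by gcongr
        _ = (Real.exp (-(p + q)) * Real.exp (min p q)) * ((1 + 1 / b) / Real.sqrt b * |p - q| ^ (-(1/2) : ℝ)) := by ring
        _ ≤ (Real.exp (-(1/2) * q) * Real.exp (-(1/2) * |p - q|)) * ((1 + 1 / b) / Real.sqrt b * |p - q| ^ (-(1/2) : ℝ)) := by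
          gcongr
        _ = _ := by ring
  · rw [← integral_const_mul]
    apply setIntegral_congr_fun measurableSet_Ioi
    intro q hq
    have hq' : a < q := hq
    have hq0 : 0 < q := ha.trans hq'
    have : ∀ p ∈ Ico a q, Real.exp (-q) * (∫ r in (0:ℝ)..p, 1 / (p * q - r^2) ^ ((3:ℝ)/2))
        = Real.exp (-q) / q * (1 / Real.sqrt (p * (q - p))) := by
      intro p hp
      rw [aux_inner (ha.trans_le hp.1) hp.2, ← one_div_mul_one_div]
      ring
    simp only
    rw [setIntegral_congr_fun measurableSet_Ico this, integral_const_mul, aux_outer ha hq']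
    ring
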